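/- arXiv:1512.03024 — 8 statements merged into one kernel-verified Lean document; each statement's English description precedes it below -/
import Mathlib

section
/- For every finite set S ⊆ ℕ, the function g := Σ_{n∈S} fₙ satisfies g′(1) = card S, i.e. the complex derivative at 1 of the finite sum of the functions fₙ over n ∈ S equals the number of elements of S. -/
/-- `xₙ = 1 + 2^((n+1)/(2^(n+1)+1))`. -/
noncomputable def xpt (n : ℕ) : ℝ :=
  1 + (2 : ℝ) ^ (((n : ℝ) + 1) / ((2 : ℝ) ^ (n + 1) + 1))

/-- `fₙ(z) = (z − xₙ)^(−2^(n+1))`. -/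
noncomputable def fseq (n : ℕ) (z : ℂ) : ℂ :=
  (z - (xpt n : ℂ)) ^ (-(2 : ℤ) ^ (n + 1))

/-!
Since `k = 2 ^ (n + 1)` is even, `k + 1` is odd, so `fₙ'(1) = -k (1 - xₙ)^(-(k + 1))` equals
`k / (xₙ - 1)^(k + 1)`. The point `xₙ = 1 + k^(1 / (k + 1))` is chosen to make this quotient `1`.
-/

theorem hasDerivAt_sub_zpow_neg_of_even {𝕜 : Type*} [NontriviallyNormedField 𝕜] {c z : 𝕜} {k : ℕ}
    (hk : Even k) (hz : z ≠ c) :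
    HasDerivAt (fun w : 𝕜 => (w - c) ^ (-(k : ℤ))) (k / (c - z) ^ (k + 1)) z := by
  have hderiv : HasDerivAt (fun w : 𝕜 => (w - c) ^ (-(k : ℤ)))
      ((-(k : ℤ) : ℤ) * (z - c) ^ (-(k : ℤ) - 1)) z :=
    (hasDerivAt_zpow (-(k : ℤ)) (z - c) (.inl (sub_ne_zero.mpr hz))).comp_sub_const z c
  refine hderiv.congr_deriv ?_
  calc ((-(k : ℤ) : ℤ) : 𝕜) * (z - c) ^ (-(k : ℤ) - 1)
      = -k * ((z - c) ^ (k + 1))⁻¹ := by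
        rw [← neg_add', ← Nat.cast_succ, zpow_neg, zpow_natCast, Int.cast_neg, Int.cast_natCast]
    _ = -k * (-(c - z) ^ (k + 1))⁻¹ := by rw [← neg_sub c z, hk.add_one.neg_pow]
    _ = k / (c - z) ^ (k + 1) := by rw [inv_neg, neg_mul_neg, div_eq_mul_inv]

theorem one_lt_xpt (n : ℕ) : 1 < xpt n :=
  lt_add_of_pos_right 1 (Real.rpow_pos_of_pos two_pos _)

theorem xpt_sub_one_pow (n : ℕ) : (xpt n - 1) ^ (2 ^ (n + 1) + 1) = 2 ^ (n + 1) := by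
  have hexp : ((n : ℝ) + 1) / (2 ^ (n + 1) + 1) * ((2 ^ (n + 1) + 1 : ℕ) : ℝ) = (n + 1 : ℕ) := by
    push_cast
    exact div_mul_cancel₀ _ (by positivity)
  rw [xpt, add_sub_cancel_left, ← Real.rpow_mul_natCast zero_le_two, hexp, Real.rpow_natCast]

theorem hasDerivAt_fseq_one (n : ℕ) : HasDerivAt (fseq n) 1 1 := by
  have heven : Even (2 ^ (n + 1)) := even_two.pow_of_ne_zero n.succ_ne_zero
  have hne : (1 : ℂ) ≠ xpt n := mod_cast (one_lt_xpt n).ne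
  have hfseq : fseq n = fun z : ℂ => (z - xpt n) ^ (-((2 ^ (n + 1) : ℕ) : ℤ)) := by
    funext z
    rw [fseq, Nat.cast_pow, Nat.cast_ofNat]
  have hquot : ((2 ^ (n + 1) : ℕ) : ℂ) / (xpt n - 1) ^ (2 ^ (n + 1) + 1) = 1 := by
    have hpow : ((xpt n : ℂ) - 1) ^ (2 ^ (n + 1) + 1) = (2 ^ (n + 1) : ℕ) :=
      mod_cast xpt_sub_one_pow n
    rw [hpow, div_self (Nat.cast_ne_zero.mpr (by positivity))]
  rw [hfseq]
  exact (hasDerivAt_sub_zpow_neg_of_even heven hne).congr_deriv hquot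

/-- The derivative at `1` of a finite sum `Σ_{n ∈ S} fₙ` equals `card S`. -/
theorem deriv_sum_fseq_one (S : Finset ℕ) :
    deriv (fun z : ℂ => ∑ n ∈ S, fseq n z) 1 = (S.card : ℂ) := by
  have hsum : HasDerivAt (fun z : ℂ => ∑ n ∈ S, fseq n z) (∑ _n ∈ S, 1) 1 :=
    .fun_sum fun n _ => hasDerivAt_fseq_one n
  rw [hsum.deriv, Finset.sum_const, nsmul_one]
end

section
/- For every n ∈ ℕ and every x ∈ ℝ with |x| < 1, the n-th iterated derivative of f satisfies f⁽ⁿ⁾(x) = (P n).eval x · exp(x²/(x²−1)) · (1 − x²)^(−2n). -/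
open Polynomial

/-- The standard bump function `f(x) = exp(x²/(x²−1))` for `|x| < 1`, and `0` otherwise. -/
noncomputable def bump (x : ℝ) : ℝ :=
  if |x| < 1 then Real.exp (x ^ 2 / (x ^ 2 - 1)) else 0

/-- The polynomials `P₀ = 1`, `Pₙ₊₁ = (1−X²)² Pₙ′ + 2((2n−1)X − 2nX³) Pₙ`. -/
noncomputable def bumpPoly : ℕ → Polynomial ℝ
  | 0 => 1
  | n + 1 =>
      (1 - X ^ 2) ^ 2 * (bumpPoly n).derivative +
        (C (4 * (n : ℝ) - 2) * X - C (4 * (n : ℝ)) * X ^ 3) * bumpPoly n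

/-!
The functions `p(x) · exp(x²/(x²−1)) · (1 − x²)ᵐ`, with `p` a polynomial and `m` an integer, are
stable under differentiation away from `x = ±1`: the exponent `m` drops by `2`, and `p` becomes
`(1−X²)² p′ − 2X(1 + m(1−X²)) p`. For `m = −2n` this is the recursion defining `Pₙ`, so iterating
from `p = 1`, `m = 0` gives the formula. On the open interval `(−1, 1)` the bump function coincides
with `exp(x²/(x²−1))`, hence has the same derivatives there.
-/

section NontriviallyNormedField

variable {𝕜 F : Type*} [NontriviallyNormedField 𝕜] [NormedAddCommGroup F] [NormedSpace 𝕜 F]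

theorem iteratedDeriv_eqOn_of_hasDerivAt {f : 𝕜 → F} {g : ℕ → 𝕜 → F} {s : Set 𝕜}
    (hs : IsOpen s) (hfg : s.EqOn f (g 0))
    (hg : ∀ n, ∀ x ∈ s, HasDerivAt (g n) (g (n + 1) x) x) (n : ℕ) :
    s.EqOn (iteratedDeriv n f) (g n) := by
  induction n with
  | zero => simpa only [iteratedDeriv_zero] using hfg
  | succ n ih =>
    intro x hx
    rw [iteratedDeriv_succ, (ih.eventuallyEq_of_mem (hs.mem_nhds hx)).deriv_eq]
    exact (hg n x hx).deriv

theorem hasDerivAt_one_sub_sq_zpow (m : ℤ) {x : 𝕜} (hx : x ^ 2 ≠ 1 ∨ 0 ≤ m) :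
    HasDerivAt (fun y ↦ (1 - y ^ 2) ^ m) (-(2 * m * x) * (1 - x ^ 2) ^ (m - 1)) x := by
  have h_inner : HasDerivAt (fun y : 𝕜 ↦ 1 - y ^ 2) (-(2 * x)) x := by
    simpa using (hasDerivAt_pow 2 x).const_sub 1
  have h_outer := hasDerivAt_zpow m (1 - x ^ 2) (hx.imp_left fun h ↦ sub_ne_zero.2 h.symm)
  exact (h_outer.comp x h_inner).congr_deriv (by ring)

end NontriviallyNormedField

theorem hasDerivAt_exp_sq_div_sq_sub_one {x : ℝ} (hx : x ^ 2 ≠ 1) :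
    HasDerivAt (fun y ↦ Real.exp (y ^ 2 / (y ^ 2 - 1)))
      (Real.exp (x ^ 2 / (x ^ 2 - 1)) * (-(2 * x) / (1 - x ^ 2) ^ 2)) x := by
  have h_sq : HasDerivAt (fun y : ℝ ↦ y ^ 2) (2 * x) x := by
    simpa using hasDerivAt_pow 2 x
  have h_exponent := h_sq.fun_div (h_sq.sub_const 1) (sub_ne_zero.2 hx)
  refine h_exponent.exp.congr_deriv ?_
  rw [← neg_sub (x ^ 2) 1, neg_sq]
  ring

theorem hasDerivAt_eval_mul_exp_mul_zpow (p : ℝ[X]) (m : ℤ) {x : ℝ} (hx : x ^ 2 ≠ 1) :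
    HasDerivAt (fun y ↦ p.eval y * Real.exp (y ^ 2 / (y ^ 2 - 1)) * (1 - y ^ 2) ^ m)
      (((1 - X ^ 2) ^ 2 * derivative p - 2 * X * (1 + C (m : ℝ) * (1 - X ^ 2)) * p).eval x *
        Real.exp (x ^ 2 / (x ^ 2 - 1)) * (1 - x ^ 2) ^ (m - 2)) x := by
  have h_ne : 1 - x ^ 2 ≠ 0 := sub_ne_zero.2 hx.symm
  have h_product := ((p.hasDerivAt x).fun_mul (hasDerivAt_exp_sq_div_sq_sub_one hx)).fun_mul
    (hasDerivAt_one_sub_sq_zpow m (.inl hx))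
  refine h_product.congr_deriv ?_
  have h_sub_two : (1 - x ^ 2) ^ (m - 2) = (1 - x ^ 2) ^ m / (1 - x ^ 2) ^ 2 :=
    mod_cast zpow_sub₀ h_ne m 2
  rw [h_sub_two, zpow_sub_one₀ h_ne]
  simp only [eval_sub, eval_add, eval_mul, eval_pow, eval_one, eval_ofNat, eval_X, eval_C]
  field_simp
  ring

theorem bumpPoly_succ_eq_sub (n : ℕ) :
    bumpPoly (n + 1) = (1 - X ^ 2) ^ 2 * derivative (bumpPoly n) -
      2 * X * (1 + C ((-(2 * n) : ℤ) : ℝ) * (1 - X ^ 2)) * bumpPoly n := by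
  simp only [bumpPoly, Int.cast_neg, Int.cast_mul, Int.cast_ofNat, Int.cast_natCast, C_neg,
    C_sub, C_mul, C_ofNat]
  ring

theorem iteratedDeriv_exp_sq_div_sq_sub_one (n : ℕ) {x : ℝ} (hx : x ^ 2 ≠ 1) :
    iteratedDeriv n (fun y ↦ Real.exp (y ^ 2 / (y ^ 2 - 1))) x =
      (bumpPoly n).eval x * Real.exp (x ^ 2 / (x ^ 2 - 1)) * (1 - x ^ 2) ^ (-(2 * (n : ℤ))) := by
  have h_open : IsOpen {y : ℝ | y ^ 2 ≠ 1} := isOpen_ne_fun (by fun_prop) continuous_const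
  refine iteratedDeriv_eqOn_of_hasDerivAt
    (g := fun n y ↦ (bumpPoly n).eval y * Real.exp (y ^ 2 / (y ^ 2 - 1)) *
      (1 - y ^ 2) ^ (-(2 * (n : ℤ)))) h_open (fun y _ ↦ by simp [bumpPoly]) (fun k y hy ↦ ?_) n hx
  have h_exponent : -(2 * ((k + 1 : ℕ) : ℤ)) = -(2 * k) - 2 := by push_cast; ring
  rw [h_exponent, bumpPoly_succ_eq_sub]
  exact hasDerivAt_eval_mul_exp_mul_zpow (bumpPoly k) (-(2 * k)) hy

theorem bump_eventuallyEq_exp_sq_div_sq_sub_one {x : ℝ} (hx : |x| < 1) :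
    bump =ᶠ[nhds x] fun y ↦ Real.exp (y ^ 2 / (y ^ 2 - 1)) := by
  filter_upwards [(isOpen_lt continuous_abs continuous_const).mem_nhds hx] with y hy
  exact if_pos hy

/-- For `|x| < 1`, `f⁽ⁿ⁾(x) = Pₙ(x) · exp(x²/(x²−1)) · (1 − x²)^(−2n)`. -/
theorem iteratedDeriv_bump_eq (n : ℕ) (x : ℝ) (hx : |x| < 1) :
    iteratedDeriv n bump x =
      (bumpPoly n).eval x * Real.exp (x ^ 2 / (x ^ 2 - 1)) *
        (1 - x ^ 2) ^ (-(2 * (n : ℤ))) := by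
  rw [(bump_eventuallyEq_exp_sq_div_sq_sub_one hx).iteratedDeriv_eq]
  exact iteratedDeriv_exp_sq_div_sq_sub_one n ((sq_lt_one_iff_abs_lt_one x).2 hx).ne
end

section
/- For every n ≥ 1 and every x ∈ ℝ with |x| < 1, it holds that (1 − x²)^(−2n) · exp(x²/(x²−1)) ≤ n^(4n) + 1. -/
/-!
Put `t = (1 - x²)⁻¹ ≥ 1` and `p = 2n`, so that the left-hand side is `t ^ p * exp (1 - t)`.
As a function of `t` this is largest at `t = p`, and for `p ≥ 1` the maximal value
`p ^ p * exp (1 - p)` is at most `p ^ p * 2 ^ (1 - p) = 2 * (p / 2) ^ p` because `2 ≤ e`.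
Finally `2 * a ≤ a ^ 2 + 1` with `a = (p / 2) ^ p = n ^ (2n)`.
For real `p < 1` the maximum lies outside the range `t ≥ 1`, where the function is at most `1`.
-/

open Real

section

variable {p t : ℝ}

lemma rpow_mul_exp_neg_le (hp : 0 ≤ p) (ht : 0 ≤ t) :
    t ^ p * exp (-t) ≤ p ^ p * exp (-p) := by
  rcases hp.eq_or_lt with rfl | hp
  · simpa using ht
  have tangent : t / p ≤ exp (t / p - 1) := by
    simpa using add_one_le_exp (t / p - 1)
  have ratio_le : t ^ p / p ^ p ≤ exp (t - p) := calc
    t ^ p / p ^ p = (t / p) ^ p := (div_rpow ht hp.le p).symm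
    _ ≤ exp (t / p - 1) ^ p := by gcongr
    _ = exp (t - p) := by rw [← exp_mul, sub_mul, div_mul_cancel₀ t hp.ne', one_mul]
  calc
    t ^ p * exp (-t) ≤ exp (t - p) * p ^ p * exp (-t) := by
      gcongr
      exact (div_le_iff₀ (rpow_pos_of_pos hp p)).1 ratio_le
    _ = p ^ p * exp (-p) := by
      rw [mul_right_comm, ← exp_add, mul_comm]
      ring_nf

lemma exp_le_two_rpow_of_nonpos (hp : p ≤ 0) : exp p ≤ 2 ^ p := by
  rw [← exp_one_rpow]
  exact rpow_le_rpow_of_nonpos two_pos exp_one_gt_two.le hp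

lemma rpow_mul_exp_one_sub_le_two_mul_rpow (hp : 1 ≤ p) (ht : 0 ≤ t) :
    t ^ p * exp (1 - t) ≤ 2 * (p / 2) ^ p := by
  have hp₀ : 0 ≤ p := zero_le_one.trans hp
  calc
    t ^ p * exp (1 - t) = exp 1 * (t ^ p * exp (-t)) := by rw [sub_eq_add_neg, exp_add]; ring
    _ ≤ exp 1 * (p ^ p * exp (-p)) :=
      mul_le_mul_of_nonneg_left (rpow_mul_exp_neg_le hp₀ ht) (exp_pos 1).le
    _ = p ^ p * exp (1 - p) := by rw [sub_eq_add_neg, exp_add]; ring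
    _ ≤ p ^ p * 2 ^ (1 - p) := by
      gcongr
      exact exp_le_two_rpow_of_nonpos (sub_nonpos.2 hp)
    _ = 2 * (p / 2) ^ p := by rw [rpow_sub two_pos, rpow_one, div_rpow hp₀ two_pos.le]; ring

lemma rpow_mul_exp_one_sub_le_one (hp : p ≤ 1) (ht : 1 ≤ t) : t ^ p * exp (1 - t) ≤ 1 := by
  have rpow_le_exp : t ^ p ≤ exp (t - 1) := calc
    t ^ p ≤ t ^ (1 : ℝ) := rpow_le_rpow_of_exponent_le ht hp
    _ ≤ exp (t - 1) := by simpa using add_one_le_exp (t - 1)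
  calc
    t ^ p * exp (1 - t) ≤ exp (t - 1) * exp (1 - t) := by gcongr
    _ = 1 := by simp [← exp_add]

lemma rpow_mul_exp_one_sub_le (hp : 0 ≤ p) (ht : 1 ≤ t) :
    t ^ p * exp (1 - t) ≤ (p / 2) ^ (2 * p) + 1 := by
  rcases le_total p 1 with hp₁ | hp₁
  · have : 0 ≤ (p / 2) ^ (2 * p) := by positivity
    linarith [rpow_mul_exp_one_sub_le_one hp₁ ht]
  · calc
      t ^ p * exp (1 - t) ≤ 2 * (p / 2) ^ p :=
        rpow_mul_exp_one_sub_le_two_mul_rpow hp₁ (zero_le_one.trans ht)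
      _ ≤ ((p / 2) ^ p) ^ 2 + 1 := by linarith [sq_nonneg ((p / 2) ^ p - 1)]
      _ = (p / 2) ^ (2 * p) + 1 := by rw [mul_comm 2 p, rpow_mul (by positivity), rpow_two]

end

theorem inv_pow_mul_exp_le_general {r x : ℝ} (hr : 0 ≤ r) (hx : |x| < 1) :
    (1 - x ^ 2) ^ (-(2 * r)) * exp (x ^ 2 / (x ^ 2 - 1)) ≤ r ^ (4 * r) + 1 := by
  have hpos : 0 < 1 - x ^ 2 := sub_pos.2 ((sq_lt_one_iff_abs_lt_one x).2 hx)
  have one_le_inv : 1 ≤ (1 - x ^ 2)⁻¹ := (one_le_inv₀ hpos).2 (by linarith [sq_nonneg x])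
  have exponent_eq : x ^ 2 / (x ^ 2 - 1) = 1 - (1 - x ^ 2)⁻¹ := by
    rw [← neg_sub 1 (x ^ 2), div_neg]
    field_simp
    ring
  calc
    (1 - x ^ 2) ^ (-(2 * r)) * exp (x ^ 2 / (x ^ 2 - 1))
        = (1 - x ^ 2)⁻¹ ^ (2 * r) * exp (1 - (1 - x ^ 2)⁻¹) := by
      rw [rpow_neg_eq_inv_rpow, exponent_eq]
    _ ≤ (2 * r / 2) ^ (2 * (2 * r)) + 1 := rpow_mul_exp_one_sub_le (by positivity) one_le_inv
    _ = r ^ (4 * r) + 1 := by ring_nf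

/-- For `n ≥ 1` and `|x| < 1`, `(1 − x²)^(−2n) · exp(x²/(x²−1)) ≤ n^(4n) + 1`. -/
theorem inv_pow_mul_exp_le (n : ℕ) (hn : 1 ≤ n) (x : ℝ) (hx : |x| < 1) :
    (1 - x ^ 2) ^ (-(2 * (n : ℤ))) * Real.exp (x ^ 2 / (x ^ 2 - 1)) ≤
      (n : ℝ) ^ (4 * n) + 1 := by
  exact_mod_cast inv_pow_mul_exp_le_general n.cast_nonneg hx
end

section
/- For every n ≥ 1 and every x ∈ ℝ, the n-th iterated derivative of f satisfies |f⁽ⁿ⁾(x)| ≤ (17n)^(4n); that is, ‖f⁽ⁿ⁾‖_∞ ≤ (17n)^(4n). -/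
/-!
Write `f(x) = e · g(1 - x²)`, where `g(y) = exp(-1/y)` for `y > 0` and `g(y) = 0` otherwise. The
functions `x ^ a (1 - x²)⁻ᵇ g(1 - x²)` are smooth on all of `ℝ`, and the derivative of each is a
combination of three others, with coefficients of total size `a + 2b + 2`. Each differentiation
raises `a` by at most one and `b` by at most two, and `y⁻ᵇ g(y) ≤ b!` because `tᵇ / b! ≤ eᵗ`, so
`|f⁽ⁿ⁾| ≤ e (5n)ⁿ (2n)!`.
-/

open scoped Nat

lemma contDiff_inv_pow_mul_expNegInvGlue {n : ℕ∞} (b : ℕ) :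
    ContDiff ℝ n fun y : ℝ ↦ y⁻¹ ^ b * expNegInvGlue y := by
  simpa using expNegInvGlue.contDiff_polynomial_eval_inv_mul (n := n) (.X ^ b)

lemma hasDerivAt_inv_pow_mul_expNegInvGlue (b : ℕ) (y : ℝ) :
    HasDerivAt (fun y : ℝ ↦ y⁻¹ ^ b * expNegInvGlue y)
      (y⁻¹ ^ (b + 2) * expNegInvGlue y - b * (y⁻¹ ^ (b + 1) * expNegInvGlue y)) y := by
  have h := expNegInvGlue.hasDerivAt_polynomial_eval_inv_mul (.X ^ b) y
  simp only [Polynomial.eval_pow, Polynomial.eval_X] at h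
  refine h.congr_deriv ?_
  cases b with
  | zero => simp
  | succ b =>
    simp only [Polynomial.derivative_X_pow_succ, Polynomial.eval_mul, Polynomial.eval_sub,
      Polynomial.eval_pow, Polynomial.eval_X, Polynomial.eval_C]
    push_cast
    ring

lemma inv_pow_mul_expNegInvGlue_nonneg (b : ℕ) (y : ℝ) : 0 ≤ y⁻¹ ^ b * expNegInvGlue y := by
  obtain hy | hy := le_or_gt y 0
  · simp [expNegInvGlue.zero_of_nonpos hy]
  · exact mul_nonneg (by positivity) (expNegInvGlue.nonneg y)

lemma inv_pow_mul_expNegInvGlue_le_factorial (b : ℕ) (y : ℝ) :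
    y⁻¹ ^ b * expNegInvGlue y ≤ b ! := by
  obtain hy | hy := le_or_gt y 0
  · simp [expNegInvGlue.zero_of_nonpos hy]
  · rw [expNegInvGlue, if_neg hy.not_ge, Real.exp_neg, ← div_eq_mul_inv,
      div_le_comm₀ (Real.exp_pos _) (by positivity)]
    exact Real.pow_div_factorial_le_exp _ (by positivity) b

/-- The function `x ^ a (1 - x²)⁻ᵇ exp(-1 / (1 - x²))`, extended by `0` to `|x| ≥ 1`. The
derivatives of `bump` are linear combinations of these. -/
noncomputable def bumpTerm (a b : ℕ) (x : ℝ) : ℝ :=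
  x ^ a * ((1 - x ^ 2)⁻¹ ^ b * expNegInvGlue (1 - x ^ 2))

lemma bump_eq_exp_one_smul_bumpTerm : bump = Real.exp 1 • bumpTerm 0 0 := by
  ext x
  simp only [bump, bumpTerm, expNegInvGlue, Pi.smul_apply, smul_eq_mul, pow_zero, one_mul,
    ← sq_lt_one_iff_abs_lt_one]
  obtain hx | hx := lt_or_ge (x ^ 2) 1
  · have hne : 1 - x ^ 2 ≠ 0 := by linarith
    have hne' : x ^ 2 - 1 ≠ 0 := by linarith
    rw [if_pos hx, if_neg (by linarith), ← Real.exp_add]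
    congr 1
    field_simp
    ring
  · rw [if_neg hx.not_gt, if_pos (by linarith), mul_zero]

lemma contDiff_bumpTerm {n : ℕ∞} (a b : ℕ) : ContDiff ℝ n (bumpTerm a b) :=
  (contDiff_id.pow a).mul <|
    (contDiff_inv_pow_mul_expNegInvGlue b).comp (contDiff_const.sub (contDiff_id.pow 2))

-- For `a = 0` the truncated exponent `a - 1` carries the coefficient `0`.
lemma deriv_bumpTerm (a b : ℕ) :
    deriv (bumpTerm a b) = (a : ℝ) • bumpTerm (a - 1) b +
      ((2 * b : ℝ) • bumpTerm (a + 1) (b + 1) - (2 : ℝ) • bumpTerm (a + 1) (b + 2)) := by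
  ext x
  have inner : HasDerivAt (fun x : ℝ ↦ 1 - x ^ 2) (-(2 * x)) x := by
    simpa using (hasDerivAt_pow 2 x).const_sub 1
  have outer := (hasDerivAt_inv_pow_mul_expNegInvGlue b (1 - x ^ 2)).comp x inner
  refine ((hasDerivAt_pow a x).mul outer).deriv.trans ?_
  simp only [bumpTerm, Function.comp_apply, Pi.add_apply, Pi.sub_apply, Pi.smul_apply, smul_eq_mul]
  ring

lemma iteratedDeriv_succ_bumpTerm (n a b : ℕ) (x : ℝ) :
    iteratedDeriv (n + 1) (bumpTerm a b) x =
      a * iteratedDeriv n (bumpTerm (a - 1) b) x +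
        (2 * b * iteratedDeriv n (bumpTerm (a + 1) (b + 1)) x -
          2 * iteratedDeriv n (bumpTerm (a + 1) (b + 2)) x) := by
  have smooth (c : ℝ) (i j : ℕ) : ContDiffAt ℝ n (c • bumpTerm i j) x :=
    ((contDiff_bumpTerm (n := n) i j).const_smul c).contDiffAt
  have smooth_sub : ContDiffAt ℝ n
      ((2 * b : ℝ) • bumpTerm (a + 1) (b + 1) - (2 : ℝ) • bumpTerm (a + 1) (b + 2)) x :=
    (smooth _ _ _).sub (smooth _ _ _)
  rw [iteratedDeriv_succ', deriv_bumpTerm, iteratedDeriv_add (smooth _ _ _) smooth_sub,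
    iteratedDeriv_sub (smooth _ _ _) (smooth _ _ _)]
  simp only [iteratedDeriv_const_smul_field, smul_eq_mul]

lemma abs_bumpTerm_le_factorial (a b : ℕ) (x : ℝ) : |bumpTerm a b x| ≤ b ! := by
  obtain hx | hx := le_or_gt |x| 1
  · rw [bumpTerm, abs_mul, abs_pow, abs_of_nonneg (inv_pow_mul_expNegInvGlue_nonneg b _)]
    exact (mul_le_of_le_one_left (inv_pow_mul_expNegInvGlue_nonneg b _)
      (pow_le_one₀ (abs_nonneg x) hx)).trans (inv_pow_mul_expNegInvGlue_le_factorial b _)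
  · have hx' : 1 - x ^ 2 ≤ 0 := by linarith [(one_lt_sq_iff_one_lt_abs x).2 hx]
    simp [bumpTerm, expNegInvGlue.zero_of_nonpos hx']

lemma abs_iteratedDeriv_bumpTerm_le (n a b : ℕ) (x : ℝ) :
    |iteratedDeriv n (bumpTerm a b) x| ≤ (a + 2 * b + 5 * n : ℕ) ^ n * (b + 2 * n)! := by
  induction n generalizing a b with
  | zero => simpa using abs_bumpTerm_le_factorial a b x
  | succ n ih =>
    set S := a + 2 * b + 5 * (n + 1)
    set F := (b + 2 * (n + 1))!
    have bound {i j : ℕ} (hij : i + 2 * j + 5 * n ≤ S) (hj : j ≤ b + 2) :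
        |iteratedDeriv n (bumpTerm i j) x| ≤ (S : ℝ) ^ n * F :=
      (ih i j).trans <| by
        gcongr
        exact Nat.factorial_le (by omega)
    have coeff_le : (a + 2 * b + 2 : ℝ) ≤ S := by exact_mod_cast (by omega : a + 2 * b + 2 ≤ S)
    rw [iteratedDeriv_succ_bumpTerm]
    calc
      _ ≤ |a * iteratedDeriv n (bumpTerm (a - 1) b) x| +
            (|2 * b * iteratedDeriv n (bumpTerm (a + 1) (b + 1)) x| +
              |2 * iteratedDeriv n (bumpTerm (a + 1) (b + 2)) x|) :=
        (abs_add_le _ _).trans (by gcongr; exact abs_sub _ _)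
      _ = a * |iteratedDeriv n (bumpTerm (a - 1) b) x| +
            (2 * b * |iteratedDeriv n (bumpTerm (a + 1) (b + 1)) x| +
              2 * |iteratedDeriv n (bumpTerm (a + 1) (b + 2)) x|) := by
        simp only [abs_mul, Nat.abs_cast, Nat.abs_ofNat]
      _ ≤ a * (S ^ n * F) + (2 * b * (S ^ n * F) + 2 * (S ^ n * F)) := by
        gcongr <;> exact bound (by omega) (by omega)
      _ = (a + 2 * b + 2) * (S ^ n * F) := by ring
      _ ≤ S * (S ^ n * F) := by gcongr
      _ = S ^ (n + 1) * F := by ring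

lemma abs_iteratedDeriv_bump_le_exp_one_mul (n : ℕ) (x : ℝ) :
    |iteratedDeriv n bump x| ≤ Real.exp 1 * ((5 * n) ^ n * (2 * n)!) := by
  rw [bump_eq_exp_one_smul_bumpTerm, iteratedDeriv_const_smul_field, smul_eq_mul, abs_mul,
    Real.abs_exp]
  gcongr
  simpa using abs_iteratedDeriv_bumpTerm_le n 0 0 x

lemma exp_one_mul_five_mul_pow_mul_factorial_le {n : ℕ} (hn : 1 ≤ n) :
    Real.exp 1 * ((5 * n) ^ n * (2 * n)!) ≤ (17 * (n : ℝ)) ^ (4 * n) := by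
  have exp_one_le : Real.exp 1 ≤ 3 ^ n :=
    Real.exp_one_lt_three.le.trans (le_self_pow₀ (by norm_num) (by omega))
  have factorial_le : ((2 * n)! : ℝ) ≤ (2 * n) ^ (2 * n) := by
    exact_mod_cast Nat.factorial_le_pow (2 * n)
  calc
    Real.exp 1 * ((5 * n) ^ n * (2 * n)!) ≤ 3 ^ n * ((5 * n) ^ n * (2 * n) ^ (2 * n)) := by gcongr
    _ = (60 * (n : ℝ) ^ 3) ^ n := by
      rw [pow_mul, ← mul_pow, ← mul_pow]
      ring
    _ ≤ (17 ^ 4 * (n : ℝ) ^ 4) ^ n := by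
      gcongr
      · norm_num
      · exact_mod_cast hn
      · norm_num
    _ = (17 * (n : ℝ)) ^ (4 * n) := by rw [← mul_pow, ← pow_mul]

/-- For `n ≥ 1`, `‖f⁽ⁿ⁾‖_∞ ≤ (17n)^(4n)`. -/
theorem iteratedDeriv_bump_bound (n : ℕ) (hn : 1 ≤ n) (x : ℝ) :
    |iteratedDeriv n bump x| ≤ (17 * (n : ℝ)) ^ (4 * n) :=
  (abs_iteratedDeriv_bump_le_exp_one_mul n x).trans (exp_one_mul_five_mul_pow_mul_factorial_le hn)
end

section
/- For every λ ∈ ℝ, every d ∈ ℕ, every m ≥ 1 and every x ∈ ℝ, the shifted bump function f_λ(x) := f(x − λ) satisfies |x|^d · |f⁽ᵐ⁾(x − λ)| ≤ (|λ| + 1)^d · (17m)^(4m); i.e. the Schwartz seminorms obey ‖f_λ‖_{d,m} := sup_x |x^d f_λ⁽ᵐ⁾(x)| ≤ (|λ|+1)^d (17m)^(4m). -/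
open Filter Metric Set
open scoped Topology Nat

theorem one_sub_sq_pos {R : Type*} [Ring R] [LinearOrder R] [IsStrictOrderedRing R] {x : R}
    (hx : |x| < 1) : 0 < 1 - x ^ 2 :=
  sub_pos.2 ((sq_lt_one_iff_abs_lt_one x).2 hx)

theorem pow_mul_exp_neg_le_factorial {t : ℝ} (ht : 0 ≤ t) (n : ℕ) :
    t ^ n * Real.exp (-t) ≤ n ! := by
  rw [Real.exp_neg, ← div_eq_mul_inv, div_le_comm₀ (Real.exp_pos t) (by positivity)]
  exact Real.pow_div_factorial_le_exp t ht n

-- Inversion maps the disc with diameter `[s - r, s + r]` onto the disc with diameter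
-- `[(s + r)⁻¹, (s - r)⁻¹]`.
theorem inv_add_le_re_inv {w : ℂ} {s r : ℝ} (hrs : r < s) (hw : ‖w - s‖ ≤ r) :
    (s + r)⁻¹ ≤ w⁻¹.re := by
  have hre : |w.re - s| ≤ r := by simpa using (Complex.abs_re_le_norm (w - s)).trans hw
  have hr : 0 ≤ r := (norm_nonneg _).trans hw
  obtain ⟨hre_lower, hre_upper⟩ := abs_le.1 hre
  have hre_pos : 0 < w.re := by linarith
  have hnormSq : 0 < Complex.normSq w := Complex.normSq_pos.2 fun h ↦ by simp [h] at hre_pos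
  have hdisc : Complex.normSq (w - s) ≤ r ^ 2 := by
    rw [Complex.normSq_eq_norm_sq]
    gcongr
  have hinverted : Complex.normSq w ≤ w.re * (s + r) := by
    simp only [Complex.normSq_apply, Complex.sub_re, Complex.sub_im, Complex.ofReal_re,
      Complex.ofReal_im, sub_zero] at hdisc ⊢
    nlinarith [mul_nonneg (sub_nonneg.2 hrs.le) (sub_nonneg.2 hre_upper)]
  rw [Complex.inv_re, inv_le_iff_one_le_mul₀ (by linarith), div_mul_eq_mul_div,
    one_le_div₀ hnormSq]
  exact hinverted

theorem iteratedDeriv_re_comp_ofReal {F : ℂ → ℂ} {x : ℝ} (hF : AnalyticAt ℂ F x) (n : ℕ) :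
    iteratedDeriv n (fun y : ℝ ↦ (F y).re) x = (iteratedDeriv n F x).re := by
  induction n generalizing x with
  | zero => simp only [iteratedDeriv_zero]
  | succ n ih =>
    have hnear : ∀ᶠ y : ℝ in 𝓝 x, AnalyticAt ℂ F y :=
      Complex.continuous_ofReal.continuousAt.eventually hF.eventually_analyticAt
    have hderiv : DifferentiableAt ℂ (iteratedDeriv n F) x := by
      rw [iteratedDeriv_eq_iterate]
      exact (hF.iterated_deriv n).differentiableAt
    rw [iteratedDeriv_succ, iteratedDeriv_succ,
      EventuallyEq.deriv_eq (hnear.mono fun y hy ↦ ih hy)]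
    exact hderiv.hasDerivAt.real_of_complex.deriv

theorem support_iteratedDeriv_subset_interior_tsupport {𝕜 E : Type*} [NontriviallyNormedField 𝕜]
    [NormedAddCommGroup E] [NormedSpace 𝕜 E] {f : 𝕜 → E} {n : ℕ} (hf : ContDiff 𝕜 n f) :
    Function.support (iteratedDeriv n f) ⊆ interior (tsupport f) := by
  refine interior_maximal (fun x hx ↦ support_iteratedFDeriv_subset (𝕜 := 𝕜) n fun h ↦ hx ?_)
    (hf.continuous_iteratedDeriv' n).isOpen_support
  simp only [iteratedDeriv_eq_iteratedFDeriv, h, zero_apply]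

theorem bump_eq_exp_one_mul_expNegInvGlue (x : ℝ) :
    bump x = Real.exp 1 * expNegInvGlue (1 - x ^ 2) := by
  unfold bump expNegInvGlue
  by_cases hx : |x| < 1
  · have hs : 0 < 1 - x ^ 2 := one_sub_sq_pos hx
    have hne : x ^ 2 - 1 ≠ 0 := by linarith
    rw [if_pos hx, if_neg hs.not_ge, ← Real.exp_add]
    congr 1
    field_simp
    ring
  · have hs : 1 - x ^ 2 ≤ 0 := sub_nonpos.2 ((one_le_sq_iff_one_le_abs x).2 (not_lt.1 hx))
    rw [if_neg hx, if_pos hs, mul_zero]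

theorem contDiff_bump {n : ℕ∞} : ContDiff ℝ n bump := by
  rw [funext bump_eq_exp_one_mul_expNegInvGlue]
  exact contDiff_const.mul (expNegInvGlue.contDiff.comp (by fun_prop))

theorem tsupport_bump_subset : tsupport bump ⊆ closedBall 0 1 :=
  closure_minimal (fun x hx ↦ by
    rw [mem_closedBall_zero_iff, Real.norm_eq_abs]
    by_contra! h
    exact hx (if_neg h.le.not_gt)) isClosed_closedBall

theorem support_iteratedDeriv_bump_subset (m : ℕ) :
    Function.support (iteratedDeriv m bump) ⊆ ball 0 1 := by
  rw [← interior_closedBall (0 : ℝ) one_ne_zero]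
  exact (support_iteratedDeriv_subset_interior_tsupport contDiff_bump).trans
    (interior_mono tsupport_bump_subset)

/-- The holomorphic extension `z ↦ exp(z²/(z²−1))` of `bump` from `(-1, 1)` to `ℂ \ {±1}`, with
the exponent written as `1 - (1 - z²)⁻¹`. -/
noncomputable def complexBump (z : ℂ) : ℂ :=
  Complex.exp (1 - (1 - z ^ 2)⁻¹)

theorem norm_complexBump (z : ℂ) :
    ‖complexBump z‖ = Real.exp 1 * Real.exp (-((1 - z ^ 2)⁻¹).re) := by
  rw [complexBump, Complex.norm_exp, ← Real.exp_add, Complex.sub_re, Complex.one_re,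
    sub_eq_add_neg]

theorem differentiableAt_complexBump {z : ℂ} (hz : 1 - z ^ 2 ≠ 0) :
    DifferentiableAt ℂ complexBump z := by
  unfold complexBump
  fun_prop (disch := exact hz)

theorem bump_eq_re_complexBump {x : ℝ} (hx : |x| < 1) : bump x = (complexBump x).re := by
  have hs : 0 < 1 - x ^ 2 := one_sub_sq_pos hx
  have hexp : complexBump x = (Real.exp (1 - (1 - x ^ 2)⁻¹) : ℝ) := by
    simp only [complexBump]
    push_cast
    rfl
  rw [hexp, Complex.ofReal_re, bump_eq_exp_one_mul_expNegInvGlue, expNegInvGlue,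
    if_neg hs.not_ge, ← Real.exp_add, ← sub_eq_add_neg]

theorem norm_one_sub_sq_sub_le {x : ℝ} (hx : |x| < 1) {z : ℂ}
    (hz : ‖z - x‖ ≤ (1 - x ^ 2) / 4) :
    ‖1 - z ^ 2 - (1 - x ^ 2 : ℝ)‖ ≤ (1 - x ^ 2) / 2 := by
  have hsum : ‖z + x‖ ≤ 2 := calc
    ‖z + x‖ = ‖(z - x) + 2 * x‖ := by ring_nf
    _ ≤ ‖z - x‖ + 2 * |x| := by
      simpa using norm_add_le (z - x) (2 * (x : ℂ))
    _ ≤ 2 := by nlinarith [sq_abs x]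
  calc
    ‖1 - z ^ 2 - (1 - x ^ 2 : ℝ)‖ = ‖z - x‖ * ‖z + x‖ := by
      rw [← norm_mul, ← norm_neg]
      push_cast
      ring_nf
    _ ≤ (1 - x ^ 2) / 4 * 2 := by
      gcongr
      exact (norm_nonneg _).trans hz
    _ = (1 - x ^ 2) / 2 := by ring

theorem two_thirds_mul_inv_le_re_inv_one_sub_sq {x : ℝ} (hx : |x| < 1) {z : ℂ}
    (hz : ‖z - x‖ ≤ (1 - x ^ 2) / 4) :
    2 / 3 * (1 - x ^ 2)⁻¹ ≤ ((1 - z ^ 2)⁻¹).re := by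
  have hs : 0 < 1 - x ^ 2 := one_sub_sq_pos hx
  refine le_of_eq_of_le ?_ (inv_add_le_re_inv (half_lt_self hs) (norm_one_sub_sq_sub_le hx hz))
  field_simp
  ring

theorem differentiableAt_complexBump_of_norm_sub_le {x : ℝ} (hx : |x| < 1) {z : ℂ}
    (hz : ‖z - x‖ ≤ (1 - x ^ 2) / 4) : DifferentiableAt ℂ complexBump z := by
  have hs : 0 < 1 - x ^ 2 := one_sub_sq_pos hx
  have hre : 0 < ((1 - z ^ 2)⁻¹).re :=
    (by positivity : 0 < 2 / 3 * (1 - x ^ 2)⁻¹).trans_le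
      (two_thirds_mul_inv_le_re_inv_one_sub_sq hx hz)
  exact differentiableAt_complexBump fun h ↦ by simp [h] at hre

theorem norm_iteratedDeriv_complexBump_le {x : ℝ} (hx : |x| < 1) (m : ℕ) :
    ‖iteratedDeriv m complexBump x‖ ≤ Real.exp 1 * 6 ^ m * (m ! : ℝ) ^ 2 := by
  have hs : 0 < 1 - x ^ 2 := one_sub_sq_pos hx
  set t : ℝ := 2 / 3 * (1 - x ^ 2)⁻¹ with ht
  have hdiff : DiffContOnCl ℂ complexBump (ball x ((1 - x ^ 2) / 4)) :=
    DifferentiableOn.diffContOnCl fun z hz ↦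
      (differentiableAt_complexBump_of_norm_sub_le hx <|
        mem_closedBall_iff_norm.1 (closure_ball_subset_closedBall hz)).differentiableWithinAt
  have hsphere : ∀ z ∈ sphere (x : ℂ) ((1 - x ^ 2) / 4),
      ‖complexBump z‖ ≤ Real.exp 1 * Real.exp (-t) := fun z hz ↦ by
    rw [norm_complexBump]
    gcongr
    exact two_thirds_mul_inv_le_re_inv_one_sub_sq hx (mem_sphere_iff_norm.1 hz).le
  calc
    ‖iteratedDeriv m complexBump x‖
        ≤ m ! * (Real.exp 1 * Real.exp (-t)) / ((1 - x ^ 2) / 4) ^ m :=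
      Complex.norm_iteratedDeriv_le_of_forall_mem_sphere_norm_le m (by positivity) hdiff hsphere
    _ = Real.exp 1 * m ! * 6 ^ m * (t ^ m * Real.exp (-t)) := by
      have hradius : ((1 - x ^ 2) / 4)⁻¹ = 6 * t := by
        rw [ht]
        field_simp
        norm_num
      rw [div_eq_mul_inv, ← inv_pow, hradius, mul_pow]
      ring
    _ ≤ Real.exp 1 * m ! * 6 ^ m * m ! := by
      gcongr
      exact pow_mul_exp_neg_le_factorial (by positivity) m
    _ = Real.exp 1 * 6 ^ m * (m ! : ℝ) ^ 2 := by ring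

theorem analyticAt_complexBump {x : ℝ} (hx : |x| < 1) : AnalyticAt ℂ complexBump x := by
  have hs : 0 < (1 - x ^ 2) / 4 := by linarith [one_sub_sq_pos hx]
  refine Complex.analyticAt_iff_eventually_differentiableAt.2 ?_
  filter_upwards [closedBall_mem_nhds (x : ℂ) hs] with z hz
  exact differentiableAt_complexBump_of_norm_sub_le hx (mem_closedBall_iff_norm.1 hz)

theorem iteratedDeriv_bump_eq_re {x : ℝ} (hx : |x| < 1) (m : ℕ) :
    iteratedDeriv m bump x = (iteratedDeriv m complexBump x).re := by
  have hnear : bump =ᶠ[𝓝 x] fun y : ℝ ↦ (complexBump y).re :=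
    (continuous_abs.continuousAt.eventually_lt_const hx).mono fun _ ↦ bump_eq_re_complexBump
  rw [hnear.iteratedDeriv_eq m, iteratedDeriv_re_comp_ofReal (analyticAt_complexBump hx)]

theorem abs_iteratedDeriv_bump_le (m : ℕ) (x : ℝ) :
    |iteratedDeriv m bump x| ≤ Real.exp 1 * 6 ^ m * (m ! : ℝ) ^ 2 := by
  by_cases hx : iteratedDeriv m bump x = 0
  · rw [hx, abs_zero]
    positivity
  · have hball : |x| < 1 := by
      simpa using support_iteratedDeriv_bump_subset m hx
    rw [iteratedDeriv_bump_eq_re hball]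
    exact (Complex.abs_re_le_norm _).trans (norm_iteratedDeriv_complexBump_le hball m)

theorem exp_one_mul_six_pow_mul_factorial_sq_le {m : ℕ} (hm : 1 ≤ m) :
    Real.exp 1 * 6 ^ m * (m ! : ℝ) ^ 2 ≤ (17 * (m : ℝ)) ^ (4 * m) := by
  have hm' : (1 : ℝ) ≤ m := by exact_mod_cast hm
  have hexp : Real.exp 1 ≤ 3 ^ m :=
    Real.exp_one_lt_three.le.trans (le_self_pow₀ (by norm_num) (by omega))
  have hfactorial : (m ! : ℝ) ≤ (m : ℝ) ^ m := by exact_mod_cast Nat.factorial_le_pow m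
  calc
    Real.exp 1 * 6 ^ m * (m ! : ℝ) ^ 2 ≤ 3 ^ m * 6 ^ m * ((m : ℝ) ^ m) ^ 2 := by gcongr
    _ = (18 * (m : ℝ) ^ 2) ^ m := by
      rw [← pow_mul, mul_comm m 2, pow_mul, ← mul_pow, ← mul_pow]
      norm_num
    _ ≤ ((17 * (m : ℝ)) ^ 4) ^ m := by
      gcongr
      calc
        18 * (m : ℝ) ^ 2 ≤ 17 ^ 4 * (m : ℝ) ^ 4 := by gcongr <;> norm_num
        _ = (17 * (m : ℝ)) ^ 4 := (mul_pow _ _ _).symm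
    _ = (17 * (m : ℝ)) ^ (4 * m) := (pow_mul _ _ _).symm

/-- The Schwartz seminorms of the shifted bump function `f_λ(x) = f(x − λ)` satisfy
`‖f_λ‖_{d,m} = sup_x |x^d f_λ⁽ᵐ⁾(x)| ≤ (|λ|+1)^d (17m)^(4m)` for `m ≥ 1`. -/
theorem shifted_bump_seminorm_bound (lam : ℝ) (d : ℕ) (m : ℕ) (hm : 1 ≤ m) (x : ℝ) :
    |x| ^ d * |iteratedDeriv m bump (x - lam)| ≤
      (|lam| + 1) ^ d * (17 * (m : ℝ)) ^ (4 * m) := by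
  by_cases hx : iteratedDeriv m bump (x - lam) = 0
  · rw [hx, abs_zero, mul_zero]
    positivity
  · have hball : |x - lam| < 1 := by
      simpa using support_iteratedDeriv_bump_subset m hx
    have habs : |x| ≤ |lam| + 1 := by linarith [abs_sub_abs_le_abs_sub x lam]
    have hderiv : |iteratedDeriv m bump (x - lam)| ≤ (17 * (m : ℝ)) ^ (4 * m) :=
      (abs_iteratedDeriv_bump_le m _).trans (exp_one_mul_six_pow_mul_factorial_sq_le hm)
    gcongr
end

section
/- For every p : ℕ → ℕ and every i ∈ ℕ, g(2·p(i)) > 0. Consequently, if K ≥ 0 is such that g(x) = 0 for all x with |x| > K, then 2·p(i) ≤ K for all i ∈ ℕ (any bound on the support of g bounds the values of p). -/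
/-- The coefficients `cᵢ = 2^(−(i+1)) · (2p(i)+1)^(−i) · (17i)^(−4i)`
(with the conventions `(2p(0)+1)⁰ = 1` and `(17·0)⁰ = 1`, so `c₀ = 1/2`). -/
noncomputable def coeffc (p : ℕ → ℕ) (i : ℕ) : ℝ :=
  (2 : ℝ) ^ (-((i : ℤ) + 1)) * ((2 * (p i : ℝ) + 1) ^ (-(i : ℤ))) *
    ((17 * (i : ℝ)) ^ (-(4 * (i : ℤ))))

/-- `g(x) = Σᵢ cᵢ f(x − 2p(i))`. -/
noncomputable def gfun (p : ℕ → ℕ) (x : ℝ) : ℝ :=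
  ∑' i : ℕ, coeffc p i * bump (x - 2 * (p i : ℝ))

theorem bump_of_abs_lt_one {x : ℝ} (hx : |x| < 1) :
    bump x = Real.exp (x ^ 2 / (x ^ 2 - 1)) :=
  if_pos hx

theorem bump_of_one_le_abs {x : ℝ} (hx : 1 ≤ |x|) : bump x = 0 :=
  if_neg hx.not_gt

theorem bump_pos_of_abs_lt_one {x : ℝ} (hx : |x| < 1) : 0 < bump x := by
  rw [bump_of_abs_lt_one hx]
  exact Real.exp_pos _

theorem bump_nonneg (x : ℝ) : 0 ≤ bump x := by
  rcases lt_or_ge |x| 1 with hx | hx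
  · exact (bump_pos_of_abs_lt_one hx).le
  · exact (bump_of_one_le_abs hx).ge

theorem bump_le_one (x : ℝ) : bump x ≤ 1 := by
  rcases lt_or_ge |x| 1 with hx | hx
  · have hx_sq : x ^ 2 < 1 := (sq_lt_one_iff_abs_lt_one x).2 hx
    rw [bump_of_abs_lt_one hx, Real.exp_le_one_iff]
    exact div_nonpos_of_nonneg_of_nonpos (sq_nonneg x) (sub_nonpos.2 hx_sq.le)
  · exact (bump_of_one_le_abs hx).trans_le zero_le_one

theorem coeffc_pos (p : ℕ → ℕ) (i : ℕ) : 0 < coeffc p i := by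
  unfold coeffc
  rcases i.eq_zero_or_pos with rfl | hi
  · simp
  · positivity

theorem coeffc_le (p : ℕ → ℕ) (i : ℕ) : coeffc p i ≤ (1 / 2) ^ (i + 1) := by
  have two_factor : (2 : ℝ) ^ (-((i : ℤ) + 1)) = (1 / 2) ^ (i + 1) := by
    rw [zpow_neg, one_div, inv_pow]
    norm_cast
  have shift_factor : (2 * (p i : ℝ) + 1) ^ (-(i : ℤ)) ≤ 1 :=
    zpow_le_one_of_nonpos₀ (le_add_of_nonneg_left (by positivity)) (by lia)
  have index_factor : (17 * (i : ℝ)) ^ (-(4 * (i : ℤ))) ≤ 1 := by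
    rcases i.eq_zero_or_pos with rfl | hi
    · simp
    · have one_le_base : (1 : ℝ) ≤ 17 * i := by
        norm_cast
        lia
      exact zpow_le_one_of_nonpos₀ one_le_base (by lia)
  calc coeffc p i ≤ (1 / 2) ^ (i + 1) * 1 * 1 := by
        unfold coeffc
        rw [two_factor]
        gcongr
    _ = (1 / 2) ^ (i + 1) := by ring

theorem summable_coeffc (p : ℕ → ℕ) : Summable (coeffc p) :=
  .of_nonneg_of_le (fun i => (coeffc_pos p i).le) (coeffc_le p)
    ((summable_nat_add_iff 1).2 summable_geometric_two)

theorem coeffc_mul_bump_nonneg (p : ℕ → ℕ) (i : ℕ) (x : ℝ) : 0 ≤ coeffc p i * bump x :=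
  mul_nonneg (coeffc_pos p i).le (bump_nonneg x)

theorem summable_coeffc_mul_bump (p : ℕ → ℕ) (y : ℕ → ℝ) :
    Summable fun i => coeffc p i * bump (y i) :=
  .of_nonneg_of_le (fun i => coeffc_mul_bump_nonneg p i (y i))
    (fun i => mul_le_of_le_one_right (coeffc_pos p i).le (bump_le_one (y i)))
    (summable_coeffc p)

theorem coeffc_mul_bump_le_gfun (p : ℕ → ℕ) (i : ℕ) (x : ℝ) :
    coeffc p i * bump (x - 2 * (p i : ℝ)) ≤ gfun p x :=
  (summable_coeffc_mul_bump p fun j => x - 2 * (p j : ℝ)).le_tsum i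
    fun j _ => coeffc_mul_bump_nonneg p j _

theorem gfun_pos_of_abs_sub_lt_one {p : ℕ → ℕ} {i : ℕ} {x : ℝ}
    (hx : |x - 2 * (p i : ℝ)| < 1) : 0 < gfun p x :=
  (mul_pos (coeffc_pos p i) (bump_pos_of_abs_lt_one hx)).trans_le
    (coeffc_mul_bump_le_gfun p i x)

/-- `g` is positive at each point `2p(i)`; consequently any bound on the support of `g`
bounds all the values `2p(i)`. -/
theorem gfun_pos_at_shifts (p : ℕ → ℕ) :
    (∀ i : ℕ, 0 < gfun p (2 * (p i : ℝ))) ∧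
      ∀ K : ℝ, 0 ≤ K → (∀ x : ℝ, K < |x| → gfun p x = 0) →
        ∀ i : ℕ, 2 * (p i : ℝ) ≤ K := by
  have gfun_pos (i : ℕ) : 0 < gfun p (2 * (p i : ℝ)) :=
    gfun_pos_of_abs_sub_lt_one (i := i) (by simp)
  refine ⟨gfun_pos, fun K _ gfun_eq_zero i => ?_⟩
  by_contra! hK
  exact (gfun_pos i).ne' (gfun_eq_zero _ (hK.trans_le (le_abs_self _)))
end

section
/- Let p : ℕ → ℕ have bounded range and let N := max of the range of p. Then there exists a polynomial P ∈ ℂ[X] with natDegree P = N such that for every z ∈ ℂ the series Σ_{n=0}^∞ 2^(−(n + p(n))) · z^(p(n)) converges to P.eval z; moreover, for every k ∈ ℕ, the coefficient of X^k in P is nonzero if and only if k lies in the range of p. -/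
/-! Grouping the terms of `∑ i, w i * z ^ p i` by the value `k` of `p` leaves finitely many powers
`z ^ k`, each weighted by the sum of `w` over the fibre of `p` above `k`. Positive weights cannot
cancel, so such a fibre sum vanishes only when the fibre is empty. -/

open Polynomial

theorem tsum_preimage_singleton_eq_zero {ι κ M : Type*} [AddCommMonoid M] [TopologicalSpace M]
    (w : ι → M) {p : ι → κ} {k : κ} (hk : k ∉ Set.range p) : ∑' i : p ⁻¹' {k}, w i = 0 := by
  have : IsEmpty (p ⁻¹' {k}) := ⟨fun i => hk ⟨i, i.2⟩⟩
  exact tsum_empty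

section FiberSumPolynomial

variable {ι R : Type*} [Semiring R] [TopologicalSpace R] {p : ι → ℕ} {N : ℕ}

/-- The polynomial obtained by collecting like powers in the series `∑ i, w i * X ^ p i`, cut off
after degree `N`; nothing is lost when `p` is bounded by `N`. -/
noncomputable def fiberSumPolynomial (w : ι → R) (p : ι → ℕ) (N : ℕ) : R[X] :=
  ∑ k ∈ Finset.range (N + 1), monomial k (∑' i : p ⁻¹' {k}, w i)

theorem coeff_fiberSumPolynomial (w : ι → R) (hp : ∀ i, p i ≤ N) (k : ℕ) :
    (fiberSumPolynomial w p N).coeff k = ∑' i : p ⁻¹' {k}, w i := by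
  have h_tail (hk : N < k) : ∑' i : p ⁻¹' {k}, w i = 0 :=
    tsum_preimage_singleton_eq_zero w fun ⟨i, hi⟩ => (hi ▸ hp i).not_gt hk
  simpa [fiberSumPolynomial, finsetSum_coeff, coeff_monomial, eq_comm] using h_tail

theorem hasSum_eval_fiberSumPolynomial [IsTopologicalSemiring R] {w : ι → R}
    (hw : ∀ k, Summable fun i : p ⁻¹' {k} => w i) (hp : ∀ i, p i ≤ N) (z : R) :
    HasSum (fun i => w i * z ^ p i) ((fiberSumPolynomial w p N).eval z) := by
  have h_fiber (k : ℕ) :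
      HasSum (fun i => (p ⁻¹' {k}).indicator w i * z ^ k) ((∑' i : p ⁻¹' {k}, w i) * z ^ k) :=
    (hasSum_subtype_iff_indicator.mp (hw k).hasSum).mul_right _
  have h_term (i : ι) :
      ∑ k ∈ Finset.range (N + 1), (p ⁻¹' {k}).indicator w i * z ^ k = w i * z ^ p i := by
    classical simp [Set.indicator_apply, Nat.lt_succ_of_le (hp i)]
  rw [fiberSumPolynomial, eval_finsetSum]
  simpa only [h_term, eval_monomial] using
    hasSum_sum (s := Finset.range (N + 1)) fun k _ => h_fiber k

theorem coeff_fiberSumPolynomial_ne_zero_iff [PartialOrder R] [IsOrderedAddMonoid R]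
    [OrderClosedTopology R] {w : ι → R} (hw : ∀ k, Summable fun i : p ⁻¹' {k} => w i)
    (hw_pos : ∀ i, 0 < w i) (hp : ∀ i, p i ≤ N) (k : ℕ) :
    (fiberSumPolynomial w p N).coeff k ≠ 0 ↔ k ∈ Set.range p := by
  rw [coeff_fiberSumPolynomial w hp]
  refine ⟨Not.imp_symm (tsum_preimage_singleton_eq_zero w), ?_⟩
  rintro ⟨i, hi⟩
  have h_le : w i ≤ ∑' j : p ⁻¹' {k}, w j :=
    (hw k).le_tsum (⟨i, hi⟩ : p ⁻¹' {k}) fun j _ => (hw_pos j).le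
  exact ((hw_pos i).trans_le h_le).ne'

end FiberSumPolynomial

theorem natDegree_eq_of_isGreatest {R : Type*} [Semiring R] {P : R[X]} {N : ℕ}
    (h : IsGreatest {k | P.coeff k ≠ 0} N) : P.natDegree = N :=
  natDegree_eq_of_le_of_coeff_ne_zero
    (natDegree_le_iff_coeff_eq_zero.mpr fun _ hk => not_not.mp fun h0 => (h.2 h0).not_gt hk) h.1

theorem summable_zpow_neg_add {K : Type*} [NormedDivisionRing K] [CompleteSpace K] {x : K}
    (hx : 1 < ‖x‖) (p : ℕ → ℕ) : Summable fun n : ℕ => x ^ (-((n : ℤ) + (p n : ℤ))) := by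
  refine .of_norm_bounded
    (summable_geometric_of_lt_one (inv_nonneg.mpr (norm_nonneg x)) (inv_lt_one_of_one_lt₀ hx))
    fun n => ?_
  calc ‖x ^ (-((n : ℤ) + (p n : ℤ)))‖ = ‖x‖ ^ (-((n : ℤ) + (p n : ℤ))) := norm_zpow x _
    _ ≤ ‖x‖ ^ (-(n : ℤ)) := zpow_le_zpow_right₀ hx.le (by lia)
    _ = ‖x‖⁻¹ ^ n := by rw [zpow_neg, zpow_natCast, inv_pow]

theorem series_eq_polynomial_general {ι R : Type*} [Semiring R] [PartialOrder R]
    [IsOrderedAddMonoid R] [TopologicalSpace R] [IsTopologicalSemiring R]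
    [OrderClosedTopology R] {w : ι → R} (hw_pos : ∀ i, 0 < w i) (p : ι → ℕ)
    (hw : ∀ k, Summable fun i : p ⁻¹' {k} => w i) {N : ℕ} (hN : IsGreatest (Set.range p) N) :
    ∃ P : R[X], P.natDegree = N ∧
      (∀ z : R, HasSum (fun i => w i * z ^ p i) (P.eval z)) ∧
      ∀ k : ℕ, P.coeff k ≠ 0 ↔ k ∈ Set.range p := by
  have hp (i : ι) : p i ≤ N := hN.2 ⟨i, rfl⟩
  have h_coeff := coeff_fiberSumPolynomial_ne_zero_iff hw hw_pos hp
  refine ⟨fiberSumPolynomial w p N, natDegree_eq_of_isGreatest ?_,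
    hasSum_eval_fiberSumPolynomial hw hp, h_coeff⟩
  simpa only [h_coeff, Set.ofPred_mem_eq] using hN

/-- If `p : ℕ → ℕ` has bounded range with maximum `N`, then the series
`Σₙ 2^(−(n+p(n))) z^(p(n))` sums to a polynomial of degree `N` whose `k`-th coefficient is
nonzero exactly when `k` is in the range of `p`. -/
theorem series_eq_polynomial (p : ℕ → ℕ) (N : ℕ) (hN : N ∈ Set.range p)
    (hmax : ∀ n : ℕ, p n ≤ N) :
    ∃ P : Polynomial ℂ, P.natDegree = N ∧
      (∀ z : ℂ, HasSum (fun n : ℕ => (2 : ℂ) ^ (-((n : ℤ) + (p n : ℤ))) * z ^ (p n))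
        (P.eval z)) ∧
      ∀ k : ℕ, P.coeff k ≠ 0 ↔ k ∈ Set.range p := by
  open scoped ComplexOrder in
  have hw_pos (n : ℕ) : 0 < (2 : ℂ) ^ (-((n : ℤ) + (p n : ℤ))) := zpow_pos two_pos _
  have hw : Summable fun n : ℕ => (2 : ℂ) ^ (-((n : ℤ) + (p n : ℤ))) :=
    summable_zpow_neg_add (by simp) p
  exact series_eq_polynomial_general hw_pos p (fun k => hw.subtype (p ⁻¹' {k}))
    ⟨hN, Set.forall_mem_range.mpr hmax⟩
end

section
/- Let p : ℕ → ℕ. For each n ≤ p 0, define a(n) := 2^(−min{ i ∈ ℕ : p i ≤ p 0 and p 0 − p i = n }) if this set is nonempty, and a(n) := 0 otherwise, and let Q := Σ_{n=0}^{p 0} a(n) · X^n ∈ ℝ[X]. Then natDegree Q = p 0 − min(range p), where min(range p) denotes the least value attained by p. -/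
open Polynomial Classical

/-- `a(n) = 2^(−min{ i | p i ≤ p 0 and p 0 − p i = n })`, and `0` if no such `i` exists. -/

noncomputable def acoeff (p : ℕ → ℕ) (n : ℕ) : ℝ :=
  if ({i : ℕ | p i ≤ p 0 ∧ p 0 - p i = n} : Set ℕ).Nonempty then
    (2 : ℝ) ^ (-((sInf {i : ℕ | p i ≤ p 0 ∧ p 0 - p i = n} : ℕ) : ℤ))
  else 0

/-- The polynomial `Q = Σ_{n=0}^{p 0} a(n) Xⁿ`. -/
noncomputable def Qpoly (p : ℕ → ℕ) : Polynomial ℝ :=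
  ∑ n ∈ Finset.range (p 0 + 1), C (acoeff p n) * X ^ n

theorem acoeff_ne_zero_iff {p : ℕ → ℕ} {n : ℕ} : acoeff p n ≠ 0 ↔ ∃ i, p i + n = p 0 := by
  have level_set_nonempty_iff :
      {i | p i ≤ p 0 ∧ p 0 - p i = n}.Nonempty ↔ ∃ i, p i + n = p 0 :=
    exists_congr fun i => by rw [Set.mem_ofPred_eq]; omega
  rw [acoeff, ite_ne_right_iff, level_set_nonempty_iff]
  exact and_iff_left (zpow_ne_zero _ two_ne_zero)

theorem acoeff_eq_zero_of_lt {p : ℕ → ℕ} {n : ℕ} (hn : p 0 < n) : acoeff p n = 0 := by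
  by_contra h
  obtain ⟨i, hi⟩ := acoeff_ne_zero_iff.mp h
  omega

theorem coeff_Qpoly (p : ℕ → ℕ) (n : ℕ) : (Qpoly p).coeff n = acoeff p n := by
  simp only [Qpoly, finsetSum_coeff, coeff_C_mul_X_pow, Finset.sum_ite_eq, Finset.mem_range,
    ite_eq_left_iff, not_lt, Nat.succ_le_iff]
  exact fun hn => (acoeff_eq_zero_of_lt hn).symm

theorem mem_support_Qpoly_iff {p : ℕ → ℕ} {n : ℕ} :
    n ∈ (Qpoly p).support ↔ ∃ i, p i + n = p 0 := by
  rw [mem_support_iff, coeff_Qpoly, acoeff_ne_zero_iff]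

/-- The degree of `Q` is `p 0 − min(range p)`. -/
theorem natDegree_Qpoly (p : ℕ → ℕ) :
    (Qpoly p).natDegree = p 0 - sInf (Set.range p) := by
  have sInf_le (i : ℕ) : sInf (Set.range p) ≤ p i := Nat.sInf_le (Set.mem_range_self i)
  obtain ⟨j, hj⟩ : sInf (Set.range p) ∈ Set.range p := Nat.sInf_mem (Set.range_nonempty p)
  apply le_antisymm
  · refine natDegree_le_iff_coeff_eq_zero.mpr fun n hn => notMem_support_iff.mp fun hmem => ?_
    obtain ⟨i, hi⟩ := mem_support_Qpoly_iff.mp hmem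
    have := sInf_le i
    omega
  · refine le_natDegree_of_mem_supp _ (mem_support_Qpoly_iff.mpr ⟨j, ?_⟩)
    rw [hj, Nat.add_sub_cancel' (sInf_le 0)]
end
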